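/- For every string w with w ≠ [2,2], the lengths of the iterates tend to infinity: length(JHC^n(w)) → ∞ as n → ∞. -/

import Mathlib

/-!
The list `JHC w = [m₁, a₁, …, m_r, a_r]` has length twice the number of runs of `w`, and consecutive
runs satisfy `aᵢ ≠ aᵢ₊₁`. In such a list (`OneDay`), each of the `r - 1` windows `aᵢ, mᵢ₊₁, aᵢ₊₁`
contains a change of value, so the list has at least `r` runs, and one more if `m₁ ≠ a₁`. Hence the
lengths of the iterates are nondecreasing from the first step on (`OneDay.length_le`), and the list
starts with two equal entries `c, c` whenever its length is unchanged by `JHC` (`OneDay.tight_head`).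

If the lengths do not tend to infinity, they are eventually constant, so some iterate `s` is
`Stationary`. Both `s` and its image start with `c, c`; the first entry of the image is the length of
the first run of `s`, so `s = c^c v` with `v` not starting with `c`, and `c ≥ 2`. The shape of `s`
forbids `c ≥ 4`. If `c = 3`, the image is `3, 3` followed by `JHC v` and it starts with `3³`, so `v`
starts with some `b³`, and `s = (3,3),(3,b),(b,b),…` contradicts `aᵢ ≠ aᵢ₊₁`. So a stationary `s` is
`2, 2, v` with `v` not starting with `2` (`Stationary.eq_two_two`). This holds for all iterates of
`s`, so `2, 2` splits off forever and a nonempty `v` would be stationary too, hence start with `2`.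
Thus `s = [2, 2]`, and the only preimage of `[2, 2]` under `JHC` is `[2, 2]` itself.
-/

open Filter

/-- Conway's audioactive (look-and-say) operator: split into maximal runs
`a₁^{m₁} ⋯ a_r^{m_r}` and output `[m₁, a₁, …, m_r, a_r]`. -/
def JHC (w : List ℕ) : List ℕ :=
  (w.splitBy (· == ·)).flatMap (fun r => [r.length, r.headI])

/-- A string is a nonempty finite list of positive integers. -/
def IsString (w : List ℕ) : Prop := w ≠ [] ∧ ∀ x ∈ w, 0 < x

/-- `w` splits as `L.R`. -/
def SplitsAs (w L R : List ℕ) : Prop :=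
  w = L ++ R ∧ L ≠ [] ∧ R ≠ [] ∧ ∀ n : ℕ, JHC^[n] w = JHC^[n] L ++ JHC^[n] R

/-- An atom is a string admitting no splitting. -/
def IsAtomString (w : List ℕ) : Prop := IsString w ∧ ∀ L R, ¬ SplitsAs w L R

/-- `w` is a split compound of the atoms in the list `As`. -/
def SplitCompound (w : List ℕ) (As : List (List ℕ)) : Prop :=
  (∀ A ∈ As, IsAtomString A) ∧ w = As.flatten ∧
    ∀ n : ℕ, JHC^[n] w = (As.map (fun A => JHC^[n] A)).flatten

open List

/-! ### `JHC` and runs -/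

theorem JHC_nil : JHC [] = [] := rfl

/-- `JHC` reads off the first maximal run. -/
theorem JHC_replicate_append (m a : ℕ) (t : List ℕ) (ht : t.head? ≠ some a) :
    JHC (replicate (m + 1) a ++ t) = (m + 1) :: a :: JHC t := by
  have h1 : (replicate (m + 1) a ++ t).splitBy (· == ·)
      = (replicate (m + 1) a).splitBy (· == ·) ++ t.splitBy (· == ·) := by
    apply splitBy_append
    intro x hx y hy
    have hxa : x = a := eq_of_mem_replicate (mem_of_mem_getLast? hx)
    subst hxa
    simp only [beq_eq_false_iff_ne]
    rintro rfl
    exact ht hy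
  have h2 : (replicate (m + 1) a).splitBy (· == ·) = [replicate (m + 1) a] := by
    apply splitBy_of_isChain (by simp)
    exact isChain_replicate_of_rel _ (by simp)
  unfold JHC
  rw [h1, h2]
  simp [replicate_succ]

theorem exists_run (x : ℕ) (w : List ℕ) :
    ∃ m t, x :: w = replicate (m + 1) x ++ t ∧ t.head? ≠ some x := by
  induction w with
  | nil => exact ⟨0, [], by simp⟩
  | cons y w ih =>
    by_cases h : y = x
    · subst h
      obtain ⟨m, t, h1, h2⟩ := ih
      exact ⟨m + 1, t, by rw [h1]; rfl, h2⟩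
    · exact ⟨0, y :: w, rfl, by simpa using h⟩

theorem JHC_cons_ne_nil (x : ℕ) (w : List ℕ) : JHC (x :: w) ≠ [] := by
  obtain ⟨m, t, h, ht⟩ := exists_run x w
  rw [h, JHC_replicate_append _ _ _ ht]
  simp

theorem JHC_ne_nil {w : List ℕ} (hw : w ≠ []) : JHC w ≠ [] := by
  obtain ⟨x, w, rfl⟩ := exists_cons_of_ne_nil hw
  exact JHC_cons_ne_nil x w

theorem length_JHC_cons_self (x : ℕ) (w : List ℕ) :
    (JHC (x :: x :: w)).length = (JHC (x :: w)).length := by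
  obtain ⟨m, t, h, ht⟩ := exists_run x w
  have h' : x :: x :: w = replicate (m + 1 + 1) x ++ t := by rw [h]; rfl
  rw [h', h, JHC_replicate_append _ _ _ ht, JHC_replicate_append _ _ _ ht]
  simp

theorem JHC_cons_of_ne (x : ℕ) (t : List ℕ) (ht : t.head? ≠ some x) :
    JHC (x :: t) = 1 :: x :: JHC t :=
  JHC_replicate_append 0 x t ht

theorem length_JHC_cons_le (x y : ℕ) (w : List ℕ) :
    (JHC (y :: w)).length ≤ (JHC (x :: y :: w)).length := by
  by_cases h : y = x
  · subst h
    rw [length_JHC_cons_self]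
  · rw [JHC_cons_of_ne x _ (by simpa using h)]
    simp only [length_cons]
    omega

/-! ### Images of `JHC` -/

/-- Lists of the form `[m₁, a₁, …, m_r, a_r]` with `aᵢ ≠ aᵢ₊₁` for all `i`; all values of `JHC` have
this form. The condition `t[1]? ≠ some a` compares `a` with the second entry of the next pair. -/
inductive OneDay : List ℕ → Prop
  | nil : OneDay []
  | cons (m a : ℕ) (t : List ℕ) : OneDay t → t[1]? ≠ some a → OneDay (m :: a :: t)

theorem JHC_getElem?_one (w : List ℕ) : (JHC w)[1]? = w.head? := by
  cases w with
  | nil => rfl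
  | cons x w =>
    obtain ⟨m, t, h, ht⟩ := exists_run x w
    rw [h, JHC_replicate_append _ _ _ ht]
    simp [replicate_succ]

theorem oneDay_JHC (w : List ℕ) : OneDay (JHC w) := by
  induction hn : w.length using Nat.strong_induction_on generalizing w with
  | _ n ih =>
    cases w with
    | nil => exact OneDay.nil
    | cons x w =>
      obtain ⟨m, t, h, ht⟩ := exists_run x w
      have hlen := congrArg length h
      simp only [length_append, length_replicate] at hlen
      rw [h, JHC_replicate_append _ _ _ ht]
      exact OneDay.cons _ _ _ (ih t.length (by omega) t rfl) (by rwa [JHC_getElem?_one])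

/-- Each window `aᵢ, mᵢ₊₁, aᵢ₊₁` contains a change of value, hence starts a new run. -/
theorem OneDay.length_add_two_le {t : List ℕ} (h : OneDay t) :
    ∀ a, t[1]? ≠ some a → t.length + 2 ≤ (JHC (a :: t)).length := by
  induction h with
  | nil => intro a _; rw [JHC_cons_of_ne a [] (by simp)]; simp
  | cons m b t _ hb ih =>
    intro a ha
    have hba : b ≠ a := by simpa using ha
    have h1 := ih b hb
    have h2 := length_JHC_cons_le m b t
    have h3 := length_JHC_cons_le a m (b :: t)
    simp only [length_cons]
    by_cases hma : m = a
    · have hbm : b ≠ m := hma ▸ hba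
      rw [JHC_cons_of_ne m (b :: t) (by simpa using hbm)] at h3
      simp only [length_cons] at h3
      omega
    · rw [JHC_cons_of_ne a _ (by simpa using hma)]
      simp only [length_cons]
      omega

theorem OneDay.length_le {s : List ℕ} (h : OneDay s) : s.length ≤ (JHC s).length := by
  cases h with
  | nil => simp
  | cons m a t ht ha =>
    have h1 := ht.length_add_two_le a ha
    have h2 := length_JHC_cons_le m a t
    simp only [length_cons]
    omega

theorem OneDay.tight_head {m a : ℕ} {t : List ℕ} (h : OneDay (m :: a :: t))
    (hl : (JHC (m :: a :: t)).length = (m :: a :: t).length) : m = a := by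
  cases h with
  | cons _ _ _ ht ha =>
    by_contra hne
    have h1 := ht.length_add_two_le a ha
    rw [JHC_cons_of_ne m _ (by simpa using Ne.symm hne)] at hl
    simp only [length_cons] at hl
    omega

/-! ### Stationary lists -/

/-- A nonempty list of the shape of a `JHC` image all of whose iterates have the same length. -/
structure Stationary (s : List ℕ) : Prop where
  oneDay : OneDay s
  ne_nil : s ≠ []
  length_eq : ∀ k, (JHC^[k] s).length = s.length

theorem Stationary.next {s : List ℕ} (h : Stationary s) : Stationary (JHC s) := by
  refine ⟨oneDay_JHC s, JHC_ne_nil h.ne_nil, fun k => ?_⟩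
  have h1 := h.length_eq (k + 1)
  have h2 := h.length_eq 1
  simp only [Function.iterate_succ_apply, Function.iterate_zero, id] at h1 h2
  rw [h1, h2]

theorem Stationary.exists_head {s : List ℕ} (h : Stationary s) : ∃ c t, s = c :: c :: t := by
  have hl := h.length_eq 1
  cases h.oneDay with
  | nil => exact absurd rfl h.ne_nil
  | cons m a t ht ha =>
    have := h.oneDay.tight_head hl
    exact ⟨m, t, by rw [this]⟩

/-- The first run of a stationary list consists of `c` copies of `c`, with `c = n + 2`. -/
theorem Stationary.exists_run {s : List ℕ} (h : Stationary s) :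
    ∃ n v, s = replicate (n + 2) (n + 2) ++ v ∧ v.head? ≠ some (n + 2) := by
  obtain ⟨c, t, rfl⟩ := h.exists_head
  obtain ⟨m, v, hv, hvc⟩ := _root_.exists_run c t
  have hv' : c :: c :: t = replicate (m + 1 + 1) c ++ v := by rw [hv]; rfl
  obtain ⟨d, u, hd⟩ := h.next.exists_head
  rw [hv', JHC_replicate_append _ _ _ hvc] at hd
  obtain ⟨rfl, rfl, -⟩ : m + 1 + 1 = d ∧ c = d ∧ _ = u := by simpa using hd
  exact ⟨m, v, hv', hvc⟩

theorem Stationary.eq_two_two {s : List ℕ} (h : Stationary s) :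
    ∃ v, s = 2 :: 2 :: v ∧ v.head? ≠ some 2 := by
  obtain ⟨n, v, hs, hv⟩ := h.exists_run
  match n with
  | 0 => exact ⟨v, hs, hv⟩
  | 1 =>
    exfalso
    obtain ⟨n', v', hs', -⟩ := h.next.exists_run
    rw [hs, JHC_replicate_append _ _ _ hv] at hs'
    -- The image starts with `3`, so its first run is `3³`, and `JHC v` starts with `3`.
    obtain rfl : n' = 1 := by
      have := congrArg head? hs'
      simp [replicate_succ] at this
      omega
    simp [replicate_succ] at hs'
    cases v with
    | nil => simp [JHC_nil] at hs'
    | cons b w =>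
      obtain ⟨m, u, hu, hub⟩ := _root_.exists_run b w
      rw [hu, JHC_replicate_append _ _ _ hub] at hs'
      obtain rfl : m = 2 := by
        have := (cons.inj hs').1
        omega
      have ho := h.oneDay
      rw [hs, hu] at ho
      -- `s = (3,3),(3,b),(b,b),…` repeats the value `b` in consecutive pairs.
      cases ho with
      | cons _ _ _ ho _ =>
        cases ho with
        | cons _ _ _ _ hb => simp at hb
  | n + 2 =>
    exfalso
    have ho := h.oneDay
    rw [hs] at ho
    cases ho with
    | cons _ _ _ _ hb => simp [replicate_succ] at hb

theorem Stationary.eq {s : List ℕ} (h : Stationary s) : s = [2, 2] := by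
  obtain ⟨v, rfl, hv⟩ := h.eq_two_two
  have step : ∀ u : List ℕ, u.head? ≠ some 2 → JHC (2 :: 2 :: u) = 2 :: 2 :: JHC u :=
    fun u hu => JHC_replicate_append 1 2 u hu
  have key : ∀ k, JHC^[k] (2 :: 2 :: v) = 2 :: 2 :: JHC^[k] v ∧
      Stationary (JHC^[k] (2 :: 2 :: v)) := by
    intro k
    induction k with
    | zero => exact ⟨rfl, h⟩
    | succ k ih =>
      obtain ⟨ih1, ih2⟩ := ih
      rw [Function.iterate_succ_apply', Function.iterate_succ_apply']
      refine ⟨?_, ih2.next⟩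
      obtain ⟨u, hu, hu2⟩ := ih2.eq_two_two
      rw [ih1] at hu
      rw [ih1]
      apply step
      obtain rfl : _ = u := by simpa using hu
      exact hu2
  by_cases hv0 : v = []
  · rw [hv0]
  · exfalso
    have hvs : Stationary v := by
      refine ⟨?_, hv0, fun k => ?_⟩
      · cases h.oneDay with
        | cons _ _ _ ho _ => exact ho
      · have := h.length_eq k
        rw [(key k).1] at this
        simpa using this
    obtain ⟨u, rfl, -⟩ := hvs.eq_two_two
    simp at hv

theorem JHC_eq_two_two {w : List ℕ} (h : JHC w = [2, 2]) : w = [2, 2] := by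
  cases w with
  | nil => simp [JHC_nil] at h
  | cons x w =>
    obtain ⟨m, t, ht, htx⟩ := exists_run x w
    rw [ht, JHC_replicate_append _ _ _ htx] at h
    obtain ⟨h1, rfl, h3⟩ : m + 1 = 2 ∧ x = 2 ∧ JHC t = [] := by simpa using h
    obtain rfl : m = 1 := by omega
    obtain rfl : t = [] := by
      by_contra ht0
      exact JHC_ne_nil ht0 h3
    exact ht

/-- For every string other than `[2,2]`, the lengths of the iterates tend to infinity. -/
theorem length_tendsto_atTop :
    ∀ w : List ℕ, IsString w → w ≠ [2, 2] →
      Tendsto (fun n : ℕ => (JHC^[n] w).length) atTop atTop := by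
  intro w hw hne
  have hnil : ∀ k, JHC^[k] w ≠ [] := by
    intro k
    induction k with
    | zero => exact hw.1
    | succ k ih => rw [Function.iterate_succ_apply']; exact JHC_ne_nil ih
  have h22 : ∀ k, JHC^[k] w ≠ [2, 2] := by
    intro k
    induction k with
    | zero => exact hne
    | succ k ih => rw [Function.iterate_succ_apply']; exact fun h => ih (JHC_eq_two_two h)
  have hday : ∀ k, OneDay (JHC^[k + 1] w) := by
    intro k
    rw [Function.iterate_succ_apply']
    exact oneDay_JHC _
  have hmono : Monotone (fun n : ℕ => (JHC^[n + 1] w).length) := by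
    apply monotone_nat_of_le_succ
    intro k
    rw [Function.iterate_succ_apply' JHC (k + 1)]
    exact (hday k).length_le
  rw [← tendsto_add_atTop_iff_nat 1]
  refine tendsto_atTop_atTop_of_monotone hmono fun b => ?_
  by_contra! hb
  -- A bounded monotone sequence of naturals attains its maximum and is constant afterwards.
  obtain ⟨N, hN⟩ : ∃ N, ∀ k, N ≤ k → (JHC^[k + 1] w).length = (JHC^[N + 1] w).length := by
    have hbdd : BddAbove (Set.range fun n : ℕ => (JHC^[n + 1] w).length) :=
      ⟨b, by rintro _ ⟨k, rfl⟩; exact (hb k).le⟩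
    obtain ⟨N, hN⟩ := Nat.sSup_mem (Set.range_nonempty _) hbdd
    refine ⟨N, fun k hk => le_antisymm ?_ (hmono hk)⟩
    exact (le_csSup hbdd ⟨k, rfl⟩).trans hN.ge
  refine h22 (N + 1) (Stationary.eq ⟨hday N, hnil _, fun k => ?_⟩)
  rw [← Function.iterate_add_apply, ← hN (k + N) (by omega)]
  rfl
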